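/- There exists a constant C > 0 such that for every integer n ≥ 3, the expected number of descents μ_n of a uniformly random derangement of S_n satisfies | μ_n − (n−1)/2 − 1/(2n) | ≤ C / (n−2)!, where μ_n = (Σ_{π derangement of {1,…,n}} des(π)) / d_n. -/

import Mathlib

open Finset

/-- The number of descents of a permutation of `Fin n`:
positions `i` with `i+1 < n` and `π(i) > π(i+1)`. -/
def descents {n : ℕ} (π : Equiv.Perm (Fin n)) : ℕ :=
  (Finset.univ.filter fun i : Fin n =>
    ∃ h : (i : ℕ) + 1 < n, π ⟨(i : ℕ) + 1, h⟩ < π i).card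

/-- The derangements of the symmetric group `S_n`. -/
def derangementSet (n : ℕ) : Finset (Equiv.Perm (Fin n)) :=
  Finset.univ.filter fun π => ∀ i, π i ≠ i

/-- Mean number of descents of a uniformly random derangement of `S_n`. -/
noncomputable def derMean (n : ℕ) : ℝ :=
  (∑ π ∈ derangementSet n, (descents π : ℝ)) / (derangementSet n).card

/-!
Conjugation by the transposition `(i i+1)` preserves derangements. It exchanges the values at `i`
and `i + 1` and relabels `i ↔ i + 1` among the values; as `i` and `i + 1` are consecutive, the
relabelling does not affect the comparison of the two values unless these are `i` and `i + 1`
themselves. So descents and ascents at `i` are equinumerous among derangements, except for those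
that exchange `i` and `i + 1`, of which there are `d_{n-2}` and which all have a descent there.
Hence `μ_n = (n - 1) / 2 * (1 + d_{n-2} / d_n)`, and the recurrence for `d_n` turns this into
`(n - 1) / 2 + 1 / (2 n) + (-1) ^ n * (n - 1) / (2 n d_n)`.
-/

open Equiv Function

section Perm

variable {α : Type*}

lemma conj_mem_derangements_iff {σ π : Perm α} :
    σ * π * σ⁻¹ ∈ derangements α ↔ π ∈ derangements α :=
  (σ.forall_congr fun x => by simp).symm

lemma swap_lt_swap_iff_of_covBy [LinearOrder α] {a b x y : α} (hab : a ⋖ b)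
    (hxy : s(x, y) ≠ s(a, b)) : swap a b x < swap a b y ↔ x < y := by
  have lt_b_iff (z : α) : z < b ↔ z ≤ a := hab.lt_iff_le_left
  have a_lt_iff (z : α) : a < z ↔ b ≤ z := by simpa using (lt_b_iff z).not.symm
  simp only [ne_eq, Sym2.eq_iff, swap_apply_def] at hxy ⊢
  grind

lemma fixedPoints_swap_mul_eq_pair_iff [DecidableEq α] {a b : α} (hab : a ≠ b) {π : Perm α} :
    fixedPoints (swap a b * π) = {a, b} ↔ π ∈ derangements α ∧ π a = b ∧ π b = a := by
  have mem_fixedPoints_iff (x : α) : x ∈ fixedPoints (swap a b * π) ↔ π x = swap a b x := by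
    rw [mem_fixedPoints, IsFixedPt, Perm.mul_apply, swap_apply_eq_iff]
  simp only [Set.ext_iff, mem_fixedPoints_iff, Set.mem_insert_iff, Set.mem_singleton_iff,
    derangements, Set.mem_ofPred_eq, swap_apply_def]
  grind

variable [Fintype α]

lemma card_filter_fixedPoints_eq [DecidableEq α] (s : Finset α) :
    #{π : Perm α | fixedPoints π = s} = numDerangements (Fintype.card α - #s) := by
  let e : derangements {x // x ∉ s} ≃ {π : Perm α // fixedPoints π = s} :=
    (derangements.subtypeEquiv (· ∉ s)).trans <| subtypeEquivRight fun π => by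
      simp only [not_not, Set.ext_iff, mem_coe, iff_comm]
  rw [← Fintype.card_subtype, ← Fintype.card_congr e, card_derangements_eq_numDerangements,
    Fintype.card_subtype_compl, Fintype.card_coe]

lemma card_derangements_exchanging [DecidableEq α] {a b : α} (hab : a ≠ b) :
    #{π ∈ (derangements α).toFinset | π a = b ∧ π b = a} =
      numDerangements (Fintype.card α - 2) := by
  rw [← card_pair hab, ← card_filter_fixedPoints_eq]
  refine card_bijective _ (swap_mul_involutive a b).bijective fun π => ?_
  simp only [mem_filter, mem_univ, true_and, Set.mem_toFinset, coe_pair,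
    fixedPoints_swap_mul_eq_pair_iff hab]

variable [LinearOrder α] {a b : α}

lemma card_derangements_lt_eq_card_gt_not_exchanging (hab : a ⋖ b) :
    #{π ∈ (derangements α).toFinset | π a < π b} =
      #{π ∈ (derangements α).toFinset | π b < π a ∧ ¬(π a = b ∧ π b = a)} := by
  have conj_involutive : Involutive fun π : Perm α => swap a b * π * (swap a b)⁻¹ := fun π => by
    simp [mul_assoc]
  refine card_bijective _ conj_involutive.bijective fun π => ?_
  simp only [mem_filter, Set.mem_toFinset, conj_mem_derangements_iff]
  simp only [Perm.mul_apply, swap_inv, swap_apply_left, swap_apply_right, swap_apply_eq_iff]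
  refine and_congr_right fun hπ => ?_
  by_cases hexch : π a = b ∧ π b = a
  · simp [hexch, hab.le]
  · have hvalues : s(π a, π b) ≠ s(a, b) := by simp [hπ a, hexch]
    rw [swap_lt_swap_iff_of_covBy hab hvalues]
    simp [and_comm, hexch]

lemma card_derangements_gt_eq_card_lt_add (hab : a ⋖ b) :
    #{π ∈ (derangements α).toFinset | π b < π a} =
      #{π ∈ (derangements α).toFinset | π a < π b} + numDerangements (Fintype.card α - 2) := by
  have gt_of_exchanging :
      {π ∈ (derangements α).toFinset | π b < π a ∧ π a = b ∧ π b = a} =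
        {π ∈ (derangements α).toFinset | π a = b ∧ π b = a} :=
    filter_congr fun π _ => and_iff_right_of_imp fun ⟨ha, hb⟩ => by simpa [ha, hb] using hab.lt
  rw [card_derangements_lt_eq_card_gt_not_exchanging hab, ← card_derangements_exchanging hab.ne,
    ← gt_of_exchanging, ← filter_filter, ← filter_filter, add_comm,
    card_filter_add_card_filter_not]

lemma two_mul_card_derangements_gt (hab : a ⋖ b) :
    2 * #{π ∈ (derangements α).toFinset | π b < π a} =
      numDerangements (Fintype.card α) + numDerangements (Fintype.card α - 2) := by
  have card_gt_add_card_lt :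
      #{π ∈ (derangements α).toFinset | π b < π a} + #{π ∈ (derangements α).toFinset | π a < π b} =
        numDerangements (Fintype.card α) := by
    have lt_iff_not_gt (π : Perm α) : π a < π b ↔ ¬π b < π a := by
      rw [not_lt, (π.injective.ne hab.ne).le_iff_lt]
    simp only [lt_iff_not_gt, card_filter_add_card_filter_not, Set.toFinset_card,
      card_derangements_eq_numDerangements]
  linarith [card_derangements_gt_eq_card_lt_add hab]

end Perm

lemma derangementSet_eq_toFinset (n : ℕ) :
    derangementSet n = (derangements (Fin n)).toFinset := by
  ext π
  rw [derangementSet, mem_filter_univ, Set.mem_toFinset]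
  rfl

lemma card_derangementSet (n : ℕ) : #(derangementSet n) = numDerangements n := by
  rw [derangementSet_eq_toFinset, Set.toFinset_card, card_derangements_fin_eq_numDerangements]

lemma descents_eq_card_filter_succ_lt_castSucc {m : ℕ} (π : Perm (Fin (m + 1))) :
    descents π = #{i : Fin m | π i.succ < π i.castSucc} := by
  simp only [descents, card_filter, Fin.sum_univ_castSucc, Fin.val_last, lt_irrefl,
    IsEmpty.exists_iff, if_false, add_zero]
  refine sum_congr rfl fun i _ => ?_
  simp [Fin.succ]

lemma two_mul_sum_descents_derangementSet (m : ℕ) :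
    2 * ∑ π ∈ derangementSet (m + 1), descents π =
      m * (numDerangements (m + 1) + numDerangements (m - 1)) := by
  have castSucc_covBy_succ (i : Fin m) : i.castSucc ⋖ i.succ :=
    Fin.orderSucc_castSucc i ▸ Order.covBy_succ_of_not_isMax i.castSucc_lt_succ.not_isMax
  calc
    2 * ∑ π ∈ derangementSet (m + 1), descents π
        = ∑ i : Fin m, 2 * #{π ∈ derangementSet (m + 1) | π i.succ < π i.castSucc} := by
      simp only [descents_eq_card_filter_succ_lt_castSucc, ← mul_sum]
      congr 1
      exact sum_card_bipartiteAbove_eq_sum_card_bipartiteBelow _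
    _ = ∑ _i : Fin m, (numDerangements (m + 1) + numDerangements (m - 1)) := by
      refine sum_congr rfl fun i _ => ?_
      rw [derangementSet_eq_toFinset]
      simpa using two_mul_card_derangements_gt (castSucc_covBy_succ i)
    _ = m * (numDerangements (m + 1) + numDerangements (m - 1)) := by simp

lemma numDerangements_add_two_eq_mul (k : ℕ) :
    (numDerangements (k + 2) : ℤ) = (k + 1) * ((k + 2) * numDerangements k - (-1) ^ k) := by
  rw [numDerangements_succ, numDerangements_succ]
  push_cast
  ring

lemma factorial_le_numDerangements_add_two (k : ℕ) : k.factorial ≤ numDerangements (k + 2) := by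
  induction k with
  | zero => simp [numDerangements_add_two]
  | succ k ih =>
    rw [numDerangements_add_two, Nat.factorial_succ]
    exact Nat.mul_le_mul (by lia) (le_add_left ih)

lemma derMean_add_two (k : ℕ) :
    derMean (k + 2) = (k + 1) / 2 + 1 / (2 * (k + 2)) +
      (-1) ^ k * ((k + 1) / (2 * (k + 2)) / numDerangements (k + 2)) := by
  have hsum : 2 * ∑ π ∈ derangementSet (k + 2), (descents π : ℝ) =
      (k + 1) * (numDerangements (k + 2) + numDerangements k) := by
    exact_mod_cast two_mul_sum_descents_derangementSet (k + 1)
  have hrec : (numDerangements (k + 2) : ℝ) =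
      (k + 1) * ((k + 2) * numDerangements k - (-1) ^ k) := by
    exact_mod_cast numDerangements_add_two_eq_mul k
  have hpos : (0 : ℝ) < numDerangements (k + 2) :=
    mod_cast k.factorial_pos.trans_le (factorial_le_numDerangements_add_two k)
  rw [derMean, card_derangementSet]
  field_simp
  linear_combination (k + 2) * hsum - hrec

/-- `μ_n = (n-1)/2 + 1/(2n) + O(1/(n-2)!)` for the expected number of descents of a
uniformly random derangement. -/
theorem mean_descents_derangements_asymptotic :
    ∃ C : ℝ, 0 < C ∧ ∀ n : ℕ, 3 ≤ n →
      |derMean n - ((n : ℝ) - 1) / 2 - 1 / (2 * n)| ≤ C / (Nat.factorial (n - 2) : ℝ) := by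
  refine ⟨1, one_pos, fun n hn => ?_⟩
  obtain ⟨k, rfl⟩ : ∃ k, n = k + 2 := ⟨n - 2, by lia⟩
  have hfact : (k.factorial : ℝ) ≤ numDerangements (k + 2) :=
    mod_cast factorial_le_numDerangements_add_two k
  have error_eq : derMean (k + 2) - ((k + 2 : ℕ) - 1 : ℝ) / 2 - 1 / (2 * (k + 2 : ℕ)) =
      (-1) ^ k * ((k + 1) / (2 * (k + 2)) / numDerangements (k + 2)) := by
    rw [derMean_add_two]
    push_cast
    ring
  have hcoeff : ((k : ℝ) + 1) / (2 * (k + 2)) ≤ 1 := by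
    rw [div_le_one (by positivity)]
    linarith
  rw [error_eq, abs_mul, abs_neg_one_pow, one_mul, abs_of_nonneg (by positivity),
    Nat.add_sub_cancel]
  gcongr
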